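/- There is a short exact sequence of graded left A(1)-modules 0 → Σ² A(1)/(Sq¹, Sq³) → A(1)/(Sq³) → A(1)/(Sq²) → 0 — precisely: the quotient map A(1)/(Sq³) → A(1)/(Sq²) (well-defined since Sq³ = Sq¹Sq² lies in the left ideal (Sq²)) is surjective with kernel generated by the class of Sq², and that kernel is isomorphic to Σ² A(1)/(Sq¹,Sq³). -/

import Mathlib

noncomputable section

/-- Relations defining A(1): (Sq¹)² = 0, Sq²Sq² = Sq¹Sq²Sq¹, Sq²Sq¹Sq²Sq¹ = Sq¹Sq²Sq¹Sq². -/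
inductive A1Rel : FreeAlgebra (ZMod 2) (Fin 2) → FreeAlgebra (ZMod 2) (Fin 2) → Prop
  | sq1_sq1 : A1Rel (FreeAlgebra.ι (ZMod 2) (0 : Fin 2) * FreeAlgebra.ι (ZMod 2) 0) 0
  | adem : A1Rel (FreeAlgebra.ι (ZMod 2) (1 : Fin 2) * FreeAlgebra.ι (ZMod 2) 1)
      (FreeAlgebra.ι (ZMod 2) (0 : Fin 2) * FreeAlgebra.ι (ZMod 2) 1 * FreeAlgebra.ι (ZMod 2) 0)
  | top : A1Rel
      (FreeAlgebra.ι (ZMod 2) (1 : Fin 2) * FreeAlgebra.ι (ZMod 2) 0 *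
        FreeAlgebra.ι (ZMod 2) 1 * FreeAlgebra.ι (ZMod 2) 0)
      (FreeAlgebra.ι (ZMod 2) (0 : Fin 2) * FreeAlgebra.ι (ZMod 2) 1 *
        FreeAlgebra.ι (ZMod 2) 0 * FreeAlgebra.ι (ZMod 2) 1)

/-- The algebra A(1), subalgebra of the mod-2 Steenrod algebra generated by Sq¹, Sq². -/
abbrev A1 := RingQuot A1Rel

def Sq1 : A1 := RingQuot.mkAlgHom (ZMod 2) A1Rel (FreeAlgebra.ι (ZMod 2) 0)
def Sq2 : A1 := RingQuot.mkAlgHom (ZMod 2) A1Rel (FreeAlgebra.ι (ZMod 2) 1)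
def Sq3 : A1 := Sq1 * Sq2

/-- Generators, for building monomial words. -/
def A1gen : Fin 2 → A1
  | 0 => Sq1
  | 1 => Sq2

/-- Weight of a word: Sq¹ has degree 1, Sq² has degree 2. -/
def A1wt (l : List (Fin 2)) : ℕ := (l.map fun i => (i : ℕ) + 1).sum

/-- The product of a word of generators. -/
def A1word (l : List (Fin 2)) : A1 := (l.map A1gen).prod

/-- The degree-`n` graded component of A(1): the F₂-span of monomials of weight `n`. -/
def A1deg (n : ℕ) : Submodule (ZMod 2) A1 :=
  Submodule.span (ZMod 2) {x | ∃ l, A1wt l = n ∧ x = A1word l}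

/-- The degree-`n` component of a cyclic module A(1)/I. -/
def A1qdeg (I : Submodule A1 A1) (n : ℕ) : Submodule (ZMod 2) (A1 ⧸ I) :=
  Submodule.map (I.mkQ.restrictScalars (ZMod 2)) (A1deg n)

/-! The map `a ↦ a • [Sq²]` from A(1) onto the kernel of A(1)/(Sq³) → A(1)/(Sq²), which raises
degrees by 2, identifies that kernel with A(1) modulo the annihilator of `[Sq²] ∈ A(1)/(Sq³)`, so
everything rests on showing that this annihilator is (Sq¹, Sq³). It contains Sq¹, as Sq¹Sq² = Sq³,
and Sq³, as Sq³Sq² = Sq¹Sq¹Sq²Sq¹ = 0. Nothing more can occur: 1 and Sq² span A(1) modulo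
(Sq¹, Sq³), and a five-dimensional representation of A(1) shows that Sq² and Sq²Sq² are linearly
independent modulo (Sq³). -/

theorem span_sup_restrictScalars_eq_top {R A : Type*} [CommSemiring R] [Semiring A] [Algebra R A]
    {S T : Set A} (hS : Algebra.adjoin R S = ⊤) (I : Ideal A) (one_mem : 1 ∈ T)
    (mul_mem : ∀ s ∈ S, ∀ t ∈ T, s * t ∈ Submodule.span R T ⊔ I.restrictScalars R) :
    Submodule.span R T ⊔ I.restrictScalars R = ⊤ := by
  set N := Submodule.span R T ⊔ I.restrictScalars R
  have one_mem_N : (1 : A) ∈ N := Submodule.mem_sup_left (Submodule.subset_span one_mem)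
  have gen_mul_mem : ∀ s ∈ S, N ≤ N.comap (LinearMap.mulLeft R s) := fun s hs =>
    sup_le (Submodule.span_le.mpr (mul_mem s hs))
      fun x hx => Submodule.mem_sup_right (I.mul_mem_left s hx)
  have mul_mem_N (a : A) : ∀ x ∈ N, a * x ∈ N := by
    induction (hS ▸ Algebra.mem_top : a ∈ Algebra.adjoin R S) using Algebra.adjoin_induction with
    | mem s hs => exact gen_mul_mem s hs
    | algebraMap r =>
      intro x hx
      rw [← Algebra.smul_def]
      exact N.smul_mem r hx
    | add a b _ _ ha hb =>
      intro x hx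
      rw [add_mul]
      exact N.add_mem (ha x hx) (hb x hx)
    | mul a b _ _ ha hb =>
      intro x hx
      rw [mul_assoc]
      exact ha _ (hb x hx)
  exact Submodule.eq_top_iff'.mpr fun a => mul_one a ▸ mul_mem_N a 1 one_mem_N

theorem ker_factor_span_singleton {R M : Type*} [Ring R] [AddCommGroup M] [Module R M]
    {p : Submodule R M} {m : M} (h : p ≤ Submodule.span R {m}) :
    LinearMap.ker (Submodule.factor h) = Submodule.span R {p.mkQ m} := by
  rw [Submodule.factor, Submodule.ker_mapQ, Submodule.comap_id, Submodule.map_span,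
    Set.image_singleton]

namespace A1

theorem Sq1_mul_Sq1 : Sq1 * Sq1 = 0 := by
  simpa only [map_mul, map_zero, Sq1] using RingQuot.mkAlgHom_rel (ZMod 2) A1Rel.sq1_sq1

theorem Sq2_mul_Sq2 : Sq2 * Sq2 = Sq1 * Sq2 * Sq1 := by
  simpa only [map_mul, Sq1, Sq2] using RingQuot.mkAlgHom_rel (ZMod 2) A1Rel.adem

theorem Sq3_mul_Sq2 : Sq3 * Sq2 = 0 :=
  calc Sq3 * Sq2 = Sq1 * (Sq2 * Sq2) := mul_assoc Sq1 Sq2 Sq2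
    _ = Sq1 * Sq1 * (Sq2 * Sq1) := by rw [Sq2_mul_Sq2]; simp only [mul_assoc]
    _ = 0 := by rw [Sq1_mul_Sq1, zero_mul]

theorem adjoin_Sq1_Sq2 : Algebra.adjoin (ZMod 2) {Sq1, Sq2} = ⊤ := by
  have range_gen : RingQuot.mkAlgHom (ZMod 2) A1Rel '' Set.range (FreeAlgebra.ι (ZMod 2)) =
      {Sq1, Sq2} := by
    rw [← Set.range_comp]
    ext x
    simp [Fin.exists_fin_two, Sq1, Sq2, eq_comm]
  rw [← range_gen, ← AlgHom.map_adjoin, FreeAlgebra.adjoin_range_ι, Algebra.map_top,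
    AlgHom.range_eq_top]
  exact RingQuot.mkAlgHom_surjective (ZMod 2) A1Rel

section Lift

variable {B : Type*} [Semiring B] [Algebra (ZMod 2) B] (b₁ b₂ : B) (h₁₁ : b₁ * b₁ = 0)
  (adem : b₂ * b₂ = b₁ * b₂ * b₁) (top : b₂ * b₁ * b₂ * b₁ = b₁ * b₂ * b₁ * b₂)

/-- The universal property of A(1): a pair of elements of an F₂-algebra satisfying the defining
relations is the image of (Sq¹, Sq²) under an algebra homomorphism. -/
def lift : A1 →ₐ[ZMod 2] B :=
  RingQuot.liftAlgHom (ZMod 2) ⟨FreeAlgebra.lift (ZMod 2) ![b₁, b₂], by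
    rintro _ _ (_ | _ | _) <;> simpa⟩

@[simp]
theorem lift_Sq1 : lift b₁ b₂ h₁₁ adem top Sq1 = b₁ := by
  simp [lift, Sq1]

@[simp]
theorem lift_Sq2 : lift b₁ b₂ h₁₁ adem top Sq2 = b₂ := by
  simp [lift, Sq2]

end Lift

open Matrix in
/-- The left multiplication action of A(1) on A(1)/(Sq³), in the basis given by the classes of
`1, Sq¹, Sq², Sq²Sq¹, Sq²Sq²`; the summand `single j i 1` records that a generator sends the `i`-th
basis vector to the `j`-th. -/
def quotSq3Rep : A1 →ₐ[ZMod 2] Matrix (Fin 5) (Fin 5) (ZMod 2) :=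
  lift (single 1 0 1 + single 4 3 1) (single 2 0 1 + single 3 1 1 + single 4 2 1)
    (by decide) (by decide) (by decide)

theorem quotSq3Rep_Sq2_col_zero : (quotSq3Rep Sq2).col 0 = Pi.single 2 1 := by
  rw [quotSq3Rep, lift_Sq2]
  decide

theorem quotSq3Rep_Sq2_mul_Sq2_col_zero : (quotSq3Rep (Sq2 * Sq2)).col 0 = Pi.single 4 1 := by
  rw [map_mul, quotSq3Rep, lift_Sq2]
  decide

open scoped Matrix in
theorem quotSq3Rep_col_zero_eq_zero_of_mem_span_Sq3 {x : A1} (hx : x ∈ Submodule.span A1 {Sq3}) :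
    (quotSq3Rep x).col 0 = 0 := by
  have Sq3_col : quotSq3Rep Sq3 *ᵥ Pi.single 0 1 = 0 := by
    rw [Sq3, map_mul, quotSq3Rep, lift_Sq1, lift_Sq2]
    decide
  obtain ⟨a, rfl⟩ := Submodule.mem_span_singleton.mp hx
  rw [← Matrix.mulVec_single_one, smul_eq_mul, map_mul, ← Matrix.mulVec_mulVec, Sq3_col,
    Matrix.mulVec_zero]

theorem linearIndependent_mkQ_Sq2_mkQ_Sq2_mul_Sq2 :
    LinearIndependent (ZMod 2)
      ![(Submodule.span A1 {Sq3}).mkQ Sq2, (Submodule.span A1 {Sq3}).mkQ (Sq2 * Sq2)] := by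
  rw [LinearIndependent.pair_iff]
  intro r s h
  have mem : r • Sq2 + s • (Sq2 * Sq2) ∈ Submodule.span A1 {Sq3} := by
    rwa [← Submodule.Quotient.mk_eq_zero]
  have col_eq : r • Pi.single 2 1 + s • Pi.single 4 1 = (0 : Fin 5 → ZMod 2) := by
    rw [← quotSq3Rep_Sq2_col_zero, ← quotSq3Rep_Sq2_mul_Sq2_col_zero,
      ← quotSq3Rep_col_zero_eq_zero_of_mem_span_Sq3 mem, map_add, map_smul, map_smul]
    rfl
  exact ⟨by simpa using congrFun col_eq 2, by simpa using congrFun col_eq 4⟩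

theorem span_one_Sq2_sup_span_Sq1_Sq3 :
    Submodule.span (ZMod 2) {1, Sq2} ⊔
      (Submodule.span A1 {Sq1, Sq3}).restrictScalars (ZMod 2) = ⊤ := by
  have Sq1_mem : Sq1 ∈ Submodule.span A1 {Sq1, Sq3} := Submodule.mem_span_of_mem (by simp)
  have Sq3_mem : Sq3 ∈ Submodule.span A1 {Sq1, Sq3} := Submodule.mem_span_of_mem (by simp)
  refine span_sup_restrictScalars_eq_top adjoin_Sq1_Sq2 _ (Set.mem_insert 1 {Sq2}) ?_
  rintro _ (rfl | rfl) _ (rfl | rfl)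
  · exact Submodule.mem_sup_right ((mul_one Sq1).symm ▸ Sq1_mem)
  · exact Submodule.mem_sup_right Sq3_mem
  · exact Submodule.mem_sup_left (Submodule.mem_span_of_mem (by simp))
  · refine Submodule.mem_sup_right ?_
    rw [Sq2_mul_Sq2]
    exact Ideal.mul_mem_left _ (Sq1 * Sq2) Sq1_mem

theorem span_Sq1_Sq3_le_torsionOf_mkQ_Sq2 :
    Submodule.span A1 {Sq1, Sq3} ≤
      Ideal.torsionOf A1 _ ((Submodule.span A1 {Sq3}).mkQ Sq2) := by
  rw [Submodule.span_le]
  rintro _ (rfl | rfl) <;>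
    rw [SetLike.mem_coe, Ideal.mem_torsionOf_iff, ← map_smul, smul_eq_mul]
  · exact (Submodule.Quotient.mk_eq_zero _).mpr (Submodule.mem_span_singleton_self Sq3)
  · rw [Sq3_mul_Sq2, map_zero]

theorem torsionOf_mkQ_Sq2 :
    Ideal.torsionOf A1 _ ((Submodule.span A1 {Sq3}).mkQ Sq2) = Submodule.span A1 {Sq1, Sq3} := by
  refine le_antisymm (fun x hx => ?_) span_Sq1_Sq3_le_torsionOf_mkQ_Sq2
  obtain ⟨y, hy, z, hz, rfl⟩ := Submodule.mem_sup.mp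
    (span_one_Sq2_sup_span_Sq1_Sq3.symm ▸ Submodule.mem_top : x ∈ _)
  obtain ⟨r, s, rfl⟩ := Submodule.mem_span_pair.mp hy
  have annihilates : (r • 1 + s • Sq2) • (Submodule.span A1 {Sq3}).mkQ Sq2 = 0 :=
    (Submodule.add_mem_iff_left _ (span_Sq1_Sq3_le_torsionOf_mkQ_Sq2 hz)).mp hx
  rw [add_smul, smul_assoc, smul_assoc, one_smul, ← map_smul _ Sq2 Sq2, smul_eq_mul] at annihilates
  obtain ⟨rfl, rfl⟩ :=
    LinearIndependent.pair_iff.mp linearIndependent_mkQ_Sq2_mkQ_Sq2_mul_Sq2 r s annihilates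
  rwa [zero_smul, zero_smul, zero_add, zero_add]

theorem span_Sq3_le_span_Sq2 : Submodule.span A1 {Sq3} ≤ Submodule.span A1 {Sq2} :=
  (Submodule.span_singleton_le_iff_mem _ _).mpr
    (Submodule.mem_span_singleton.mpr ⟨Sq1, rfl⟩)

end A1

/-- The quotient map A(1)/(Sq³) → A(1)/(Sq²) is a well-defined surjection of left
A(1)-modules whose kernel is generated by the class of Sq², and that kernel is
isomorphic to Σ² A(1)/(Sq¹,Sq³); i.e. there is a short exact sequence
`0 → Σ² A(1)/(Sq¹,Sq³) → A(1)/(Sq³) → A(1)/(Sq²) → 0`. -/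
theorem ses_eta2_c2 :
    ∃ g : (A1 ⧸ (Submodule.span A1 {Sq3})) →ₗ[A1] (A1 ⧸ (Submodule.span A1 {Sq2})),
      (∀ x : A1, g ((Submodule.span A1 {Sq3}).mkQ x) = (Submodule.span A1 {Sq2}).mkQ x) ∧
      Function.Surjective g ∧
      LinearMap.ker g = Submodule.span A1 {(Submodule.span A1 {Sq3}).mkQ Sq2} ∧
      Nonempty ((A1 ⧸ (Submodule.span A1 {Sq1, Sq3})) ≃ₗ[A1] (LinearMap.ker g)) := by
  have hker := ker_factor_span_singleton A1.span_Sq3_le_span_Sq2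
  refine ⟨Submodule.factor A1.span_Sq3_le_span_Sq2, Submodule.factor_mk _,
    Submodule.factor_surjective _, hker, ⟨?_⟩⟩
  exact Submodule.quotEquivOfEq _ _ A1.torsionOf_mkQ_Sq2.symm ≪≫ₗ
    Ideal.quotTorsionOfEquivSpanSingleton A1 _ _ ≪≫ₗ LinearEquiv.ofEq _ _ hker.symm

end
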